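/- arXiv:2103.06635 — 3 statements merged into one kernel-verified Lean document; each statement's English description precedes it below -/
import Mathlib

section
/- Let (d_n)_{n≥0} count Dyck paths of semilength n whose peaks all occur at odd heights (equivalently, avoiding all even peak heights). Then the sequence of Hankel determinants (H_1, H_2, H_3, ...) of (d_n) is periodic with period 6, equal to the repetition of (1, 0, -1, -1, 0, 1). -/
/-- Height of a lattice path (given by up/down indicators `p`) after `k` steps. -/
def pathHeight (p : ℕ → Bool) (k : ℕ) : ℤ :=
  ∑ i ∈ Finset.range k, (if p i then (1 : ℤ) else -1)

/-- The number of Dyck paths of semilength `n` (paths of `2n` steps `(1,1)`/`(1,-1)`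
from `(0,0)` to `(2n,0)` staying weakly above the x-axis) none of whose peaks has
height in the set `S`.  A peak is an up-step immediately followed by a down-step;
its height is the y-coordinate of its apex. -/
noncomputable def dyckCount (S : ℕ → Prop) (n : ℕ) : ℕ :=
  Nat.card {p : ℕ → Bool //
    (∀ i, 2 * n ≤ i → p i = false) ∧
    (∀ k, k ≤ 2 * n → 0 ≤ pathHeight p k) ∧
    pathHeight p (2 * n) = 0 ∧
    (∀ i, i + 1 < 2 * n → p i = true → p (i + 1) = false →
      ¬ S (pathHeight p (i + 1)).toNat) }

namespace Stmt9Aux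

/-- Motzkin triangle. -/
def L : ℕ → ℕ → ℕ
  | 0, 0 => 1
  | 0, _ + 1 => 0
  | n + 1, 0 => L n 0 + L n 1
  | n + 1, k + 1 => L n k + L n (k + 1) + L n (k + 2)

def P (s : Bool) (N : ℕ) (H : ℤ) (p : ℕ → Bool) : Prop :=
  (∀ i, N ≤ i → p i = false) ∧ (∀ k, k ≤ N → 0 ≤ H + pathHeight p k) ∧
  H + pathHeight p N = 0 ∧
  (∀ i, i + 1 < N → p i = true → p (i + 1) = false →
    ¬ Even (H + pathHeight p (i + 1)).toNat) ∧
  (s = true → 0 < N → p 0 = false → ¬ Even H.toNat)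

def cnt : Bool → ℕ → ℤ → ℕ
  | _, 0, H => if H = 0 then 1 else 0
  | s, N + 1, H => if 0 ≤ H then cnt true N (H + 1) +
      (if s = true ∧ Even H.toNat then 0 else cnt false N (H - 1)) else 0

def cons (b : Bool) (p : ℕ → Bool) : ℕ → Bool
  | 0 => b
  | n + 1 => p n

lemma ph_cons (b : Bool) (p : ℕ → Bool) (k : ℕ) :
    pathHeight (cons b p) (k + 1) = (if b then 1 else -1) + pathHeight p k := by
  unfold pathHeight
  rw [Finset.sum_range_succ']
  rw [add_comm]
  rfl

lemma ph_zero (p : ℕ → Bool) : pathHeight p 0 = 0 := by simp [pathHeight]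

lemma P_cons (s b : Bool) (N : ℕ) (H : ℤ) (p : ℕ → Bool) :
    P s (N + 1) H (cons b p) ↔ (0 ≤ H ∧ (s = true → b = false → ¬ Even H.toNat) ∧
      P b N (H + if b then 1 else -1) p) := by
  constructor
  · rintro ⟨h1, h2, h3, h4, h5⟩
    refine ⟨?_, ?_, ?_, ?_, ?_, ?_, ?_⟩
    · simpa [ph_zero] using h2 0 (by omega)
    · intro hs hb; exact h5 hs (by omega) hb
    · intro i hi; exact h1 (i + 1) (by omega)
    · intro k hk
      have := h2 (k + 1) (by omega)
      rw [ph_cons] at this; rw [add_assoc]; exact this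
    · rw [ph_cons] at h3; rw [add_assoc]; exact h3
    · intro i hi ha hb
      have := h4 (i + 1) (by omega) ha hb
      rw [ph_cons] at this; rw [add_assoc]; exact this
    · intro hb hN hp
      have := h4 0 (by omega) hb hp
      rw [ph_cons, ph_zero, add_zero] at this; exact this
  · rintro ⟨g1, g2, h1, h2, h3, h4, h5⟩
    refine ⟨?_, ?_, ?_, ?_, ?_⟩
    · rintro (_ | i) hi
      · omega
      · exact h1 i (by omega)
    · rintro (_ | k) hk
      · simpa [ph_zero] using g1
      · rw [ph_cons, ← add_assoc]; exact h2 k (by omega)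
    · rw [ph_cons, ← add_assoc]; exact h3
    · rintro (_ | i) hi ha hb
      · rw [ph_cons, ph_zero, add_zero]; exact h5 ha (by omega) hb
      · rw [ph_cons, ← add_assoc]; exact h4 i (by omega) ha hb
    · intro hs _ hb; exact g2 hs hb

def splitEquiv (Q : (ℕ → Bool) → Prop) :
    {p // Q p} ≃ {p // Q (cons true p)} ⊕ {p // Q (cons false p)} where
  toFun p := if h : p.1 0 = true then
      Sum.inl ⟨fun i => p.1 (i + 1), by
        have : cons true (fun i => p.1 (i + 1)) = p.1 := by
          funext i; cases i <;> simp [cons, h]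
        rw [this]; exact p.2⟩
    else Sum.inr ⟨fun i => p.1 (i + 1), by
        have : cons false (fun i => p.1 (i + 1)) = p.1 := by
          funext i; cases i <;> simp [cons] at h ⊢; simp [h]
        rw [this]; exact p.2⟩
  invFun x := x.elim (fun p => ⟨cons true p.1, p.2⟩) (fun p => ⟨cons false p.1, p.2⟩)
  left_inv p := by
    by_cases h : p.1 0 = true
    · simp only [h, dite_true]
      apply Subtype.ext
      funext i; cases i <;> simp [cons, h]
    · simp only [h]
      apply Subtype.ext
      funext i; cases i <;> simp [cons] at h ⊢; simp [h]
  right_inv x := by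
    rcases x with x | x <;> simp [cons]

lemma card_P (N : ℕ) : ∀ (s : Bool) (H : ℤ),
    Finite {p // P s N H p} ∧ Nat.card {p // P s N H p} = cnt s N H := by
  induction N with
  | zero =>
    intro s H
    by_cases hH : H = 0
    · have key : ∀ p, P s 0 H p ↔ p = fun _ => false := by
        intro p
        constructor
        · intro h; funext i; exact h.1 i (by omega)
        · rintro rfl
          refine ⟨fun _ _ => rfl, ?_, ?_, ?_, ?_⟩
          · intro k hk
            obtain rfl : k = 0 := by omega
            simp [ph_zero, hH]
          · simp [ph_zero, hH]
          · intro i hi; omega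
          · intro _ h; omega
      simp only [key]
      exact ⟨inferInstance, by simp [cnt, hH]⟩
    · have key : IsEmpty {p // P s 0 H p} := by
        constructor
        rintro ⟨p, hp⟩
        have := hp.2.2.1
        rw [ph_zero] at this; omega
      exact ⟨inferInstance, by simp [cnt, hH]⟩
  | succ N ih =>
    intro s H
    by_cases hH : 0 ≤ H
    · have e := splitEquiv (P s (N + 1) H)
      have h1 : ∀ p, P s (N + 1) H (cons true p) ↔ P true N (H + 1) p := by
        intro p; rw [P_cons]; simp [hH]
      simp only [h1] at e
      obtain ⟨f1, c1⟩ := ih true (H + 1)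
      have h2 : Finite {p // P s (N + 1) H (cons false p)} ∧
          Nat.card {p // P s (N + 1) H (cons false p)} =
            (if s = true ∧ Even H.toNat then 0 else cnt false N (H - 1)) := by
        split_ifs with hc
        · have : IsEmpty {p // P s (N + 1) H (cons false p)} := by
            constructor
            rintro ⟨p, hp⟩
            rw [P_cons] at hp
            exact hp.2.1 hc.1 rfl hc.2
          exact ⟨inferInstance, by simp⟩
        · have h3 : ∀ p, P s (N + 1) H (cons false p) ↔ P false N (H - 1) p := by
            intro p; rw [P_cons]
            have : s = true → ¬ Even H.toNat := fun a b => hc ⟨a, b⟩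
            simp only [hH, true_and, forall_const]
            simp only [Bool.false_eq_true, if_false, ← sub_eq_add_neg]
            tauto
          simp only [h3]
          exact ih false (H - 1)
      obtain ⟨f2, c2⟩ := h2
      refine ⟨Finite.of_equiv _ e.symm, ?_⟩
      rw [Nat.card_congr e, Nat.card_sum, c1, c2]
      simp only [cnt, hH, if_true]
    · have key : IsEmpty {p // P s (N + 1) H p} := by
        constructor
        rintro ⟨p, hp⟩
        have := hp.2.1 0 (by omega)
        rw [ph_zero] at this; omega
      exact ⟨inferInstance, by simp [cnt, hH]⟩

lemma dyck_eq_cnt (n : ℕ) : dyckCount (fun k => Even k) n = cnt false (2 * n) 0 := by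
  rw [← (card_P (2 * n) false 0).2]
  unfold dyckCount P
  simp

lemma cnt_neg (s : Bool) (N : ℕ) (H : ℤ) (h : H < 0) : cnt s N H = 0 := by
  cases N <;> simp [cnt] <;> omega

lemma cnt_odd (s : Bool) (N h : ℕ) :
    cnt s (N + 1) (2 * h + 1) = cnt true N (2 * (h + 1 : ℕ)) + cnt false N (2 * h) := by
  have h1 : (0 : ℤ) ≤ 2 * h + 1 := by omega
  have h2 : (2 * (h : ℤ) + 1).toNat = 2 * h + 1 := by omega
  have h3 : ¬ Even (2 * h + 1) := by simp
  simp only [cnt, h1, h2, h3, if_true, and_false, if_false]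
  congr 2 <;> push_cast <;> ring

lemma cnt_true (N h : ℕ) : cnt true (N + 2) (2 * h) =
    cnt true N (2 * (h + 1 : ℕ)) + cnt false N (2 * h) := by
  have h1 : (0 : ℤ) ≤ 2 * h := by omega
  have h2 : (2 * (h : ℤ)).toNat = 2 * h := by omega
  have h3 : Even (2 * h) := by simp
  rw [cnt]
  simp only [h1, h2, h3, if_true, and_self, add_zero, cnt_odd]

lemma cnt_false_zero (N : ℕ) : cnt false (N + 2) (2 * (0 : ℕ)) =
    cnt true (N + 2) (2 * (0 : ℕ)) := by
  conv_lhs => rw [cnt]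
  conv_rhs => rw [cnt]
  simp [cnt_neg]

lemma cnt_false_succ (N h : ℕ) : cnt false (N + 2) (2 * (h + 1 : ℕ)) =
    cnt true (N + 2) (2 * (h + 1 : ℕ)) + cnt true (N + 2) (2 * h) := by
  have h1 : (0 : ℤ) ≤ 2 * (h + 1 : ℕ) := by omega
  have h4 : (2 * ((h + 1 : ℕ) : ℤ)) - 1 = 2 * h + 1 := by push_cast; ring
  rw [cnt]
  simp only [h1, if_true, h4, cnt_odd, cnt_true]
  simp

lemma cnt_L (m : ℕ) : ∀ h : ℕ, cnt true (2 * m + 2) (2 * h) = L m h := by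
  induction m with
  | zero =>
    intro h
    rw [cnt_true]
    cases h <;> simp [cnt, L] <;> omega
  | succ m ih =>
    intro h
    rw [cnt_true, show 2 * (m + 1) = 2 * m + 2 by ring, ih]
    cases h with
    | zero => rw [cnt_false_zero, ih, L]; ring
    | succ h => rw [cnt_false_succ, ih, ih, L]; ring

/-- the counting sequence -/
def d : ℕ → ℤ
  | 0 => 1
  | n + 1 => L n 0

lemma dyck_eq (n : ℕ) : (dyckCount (fun k => Even k) n : ℤ) = d n := by
  rw [dyck_eq_cnt]
  cases n with
  | zero => simp [cnt, d]
  | succ n =>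
    have := cnt_false_zero (2 * n)
    rw [cnt_L] at this
    simp only [d, ← this]
    simp [mul_add]

lemma L_zero (n : ℕ) : ∀ k, n < k → L n k = 0 := by
  induction n with
  | zero => intro k hk; cases k <;> simp [L] at *
  | succ n ih =>
    intro k hk
    cases k with
    | zero => omega
    | succ k => rw [L, ih _ (by omega), ih _ (by omega), ih _ (by omega)]

lemma L_cd (i j K : ℕ) :
    (∑ k ∈ Finset.range (K + 1), L (i + 1) k * L j k) + L i K * L j (K + 1) =
    (∑ k ∈ Finset.range (K + 1), L i k * L (j + 1) k) + L i (K + 1) * L j K := by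
  induction K with
  | zero => simp [L]; ring
  | succ K ih =>
    rw [Finset.sum_range_succ, Finset.sum_range_succ _ (K + 1), L, L]
    linarith

lemma L_sum (i : ℕ) : ∀ j K, i < K → ∑ k ∈ Finset.range K, L i k * L j k = L (i + j) 0 := by
  induction i with
  | zero =>
    intro j K hK
    obtain ⟨K, rfl⟩ : ∃ K', K = K' + 1 := ⟨K - 1, by omega⟩
    rw [Finset.sum_range_succ']
    simp [L]
  | succ i ih =>
    intro j K hK
    obtain ⟨K, rfl⟩ : ∃ K', K = K' + 1 := ⟨K - 1, by omega⟩
    have := L_cd i j K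
    rw [L_zero i K (by omega), L_zero i (K + 1) (by omega), ih _ _ (by omega)] at this
    rw [show i + 1 + j = i + (j + 1) by ring]
    simpa using this

def W : ℕ → ℕ → ℤ
  | 0, 0 => 1
  | 0, _ + 1 => 0
  | _ + 1, 0 => 0
  | i + 1, k + 1 => L i k

lemma W_zero (i k : ℕ) (h : i < k) : W i k = 0 := by
  cases i <;> cases k <;> simp [W] at *
  exact L_zero _ _ h

lemma W_diag (i : ℕ) : W i i = 1 := by
  cases i with
  | zero => rfl
  | succ i =>
    simp only [W]
    induction i with
    | zero => rfl
    | succ i ih => 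
      rw [L, L_zero _ (i + 1) (by omega), L_zero _ (i + 2) (by omega)]; simpa using ih

def T (k l : ℕ) : ℤ := if k ≤ l + 1 ∧ l ≤ k + 1 then 1 else 0

lemma TW (N j k : ℕ) (hj : j < N) (hk : k < N) :
    ∑ l ∈ Finset.range N, T k l * W j l = (if k = 0 then d j else L j (k - 1)) := by
  have h1 : ∑ l ∈ Finset.range N, T k l * W j l =
      ∑ l ∈ Finset.range (N + 1), T k l * W j l := by
    rw [Finset.sum_range_succ, W_zero j N hj]; simp
  rw [h1]
  cases k with
  | zero =>
    rw [← Finset.sum_subset (s₁ := {0, 1})]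
    · rw [Finset.sum_pair (by omega)]
      rcases j with _ | j <;> simp [T, W, d]
    · intro x; simp; omega
    · intro x hx hx'
      simp at hx'
      simp [T]; omega
  | succ k =>
    rw [← Finset.sum_subset (s₁ := {k, k + 1, k + 2})]
    · rw [Finset.sum_insert (by simp), Finset.sum_pair (by omega)]
      have t1 : T (k + 1) k = 1 := by simp [T]; omega
      have t2 : T (k + 1) (k + 1) = 1 := by simp [T]
      have t3 : T (k + 1) (k + 2) = 1 := by simp [T]
      rw [t1, t2, t3]
      rcases j with _ | j <;> rcases k with _ | k <;> simp [W, L] <;> ring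
    · intro x; simp; omega
    · intro x hx hx'
      simp at hx'
      simp only [T]
      rw [if_neg (by omega)]; simp

lemma WTW (N i j : ℕ) (hi : i < N) (hj : j < N) :
    ∑ k ∈ Finset.range N, W i k * (∑ l ∈ Finset.range N, T k l * W j l) = d (i + j) := by
  rw [Finset.sum_congr rfl (fun k hk => by
    rw [TW N j k hj (Finset.mem_range.1 hk)])]
  obtain ⟨N, rfl⟩ : ∃ K', N = K' + 1 := ⟨N - 1, by omega⟩
  rw [Finset.sum_range_succ']
  cases i with
  | zero => simp [W]
  | succ i =>
    simp only [W, d, show i + 1 + j = i + j + 1 by ring]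
    rw [← L_sum i j N (by omega)]
    simp

def TM (n : ℕ) : Matrix (Fin n) (Fin n) ℤ := Matrix.of fun i j => T i j
def WM (n : ℕ) : Matrix (Fin n) (Fin n) ℤ := Matrix.of fun i j => W i j

lemma det_WM (n : ℕ) : (WM n).det = 1 := by
  rw [Matrix.det_of_isLowerTriangular]
  · simp [WM, W_diag]
  · intro i j hij
    exact W_zero _ _ (by simpa using hij)

lemma hankel (n : ℕ) : (Matrix.of fun i j : Fin n => d ((i : ℕ) + (j : ℕ))) =
    WM n * (TM n * (WM n).transpose) := by
  ext i j
  rw [Matrix.mul_apply]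
  simp only [Matrix.mul_apply, Matrix.transpose_apply, Matrix.of_apply, WM, TM]
  rw [← WTW n i j i.2 j.2, ← Fin.sum_univ_eq_sum_range
    (fun k => W i k * (∑ l ∈ Finset.range n, T k l * W j l))]
  refine Finset.sum_congr rfl fun k _ => ?_
  rw [← Fin.sum_univ_eq_sum_range (fun l => T k l * W j l)]

lemma T_succ (i j : ℕ) : T (i + 1) (j + 1) = T i j := by
  simp [T]

lemma det_TM (n : ℕ) : (TM (n + 2)).det = (TM (n + 1)).det - (TM n).det := by
  rw [Matrix.det_succ_row_zero, Fin.sum_univ_succ, Fin.sum_univ_succ, Finset.sum_eq_zero]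
  · have e1 : (TM (n + 2)).submatrix Fin.succ (Fin.succAbove 0) = TM (n + 1) := by
      ext i j; simp [TM, T_succ]
    have e2 : ((TM (n + 2)).submatrix Fin.succ (Fin.succAbove (Fin.succ 0))).det
        = (TM n).det := by
      rw [Matrix.det_succ_column_zero, Fin.sum_univ_succ, Finset.sum_eq_zero]
      · have e3 : (((TM (n + 2)).submatrix Fin.succ (Fin.succAbove (Fin.succ 0))).submatrix
            (Fin.succAbove 0) Fin.succ) = TM n := by
          ext i j
          simp [TM, T_succ]
        rw [e3]
        simp [TM, T]
      · intro i _
        simp [TM, T]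
    rw [e1, e2]
    simp [TM, T]
    ring
  · intro i _
    simp [TM, T]

lemma per (t : ℕ → ℤ) (h0 : t 0 = 1) (h1 : t 1 = 1)
    (h : ∀ n, t (n + 2) = t (n + 1) - t n) (m : ℕ) :
    t (6 * m) = 1 ∧ t (6 * m + 1) = 1 := by
  induction m with
  | zero => exact ⟨h0, h1⟩
  | succ m ih =>
    obtain ⟨a, b⟩ := ih
    have e2 := h (6 * m)
    have e3 := h (6 * m + 1)
    have e4 := h (6 * m + 2)
    have e5 := h (6 * m + 3)
    have e6 := h (6 * m + 4)
    have e7 := h (6 * m + 5)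
    simp only [add_assoc, Nat.reduceAdd] at *
    rw [show 6 * (m + 1) = 6 * m + 6 by ring]
    simp only [add_assoc, Nat.reduceAdd]
    constructor <;> linarith

lemma det_val (n : ℕ) : (TM (n + 1)).det =
    ![1, 0, -1, -1, 0, 1] ⟨n % 6, Nat.mod_lt _ (by norm_num)⟩ := by
  obtain ⟨t, ht⟩ : ∃ t : ℕ → ℤ, ∀ n, t n = (TM n).det := ⟨_, fun _ => rfl⟩
  have h0 : t 0 = 1 := by rw [ht]; simp
  have h1 : t 1 = 1 := by rw [ht]; simp [TM, T]
  have h : ∀ n, t (n + 2) = t (n + 1) - t n := by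
    intro n; rw [ht, ht, ht, det_TM]
  rw [← ht]
  obtain ⟨a, b⟩ := per t h0 h1 h (n / 6)
  have e2 := h (6 * (n / 6))
  have e3 := h (6 * (n / 6) + 1)
  have e4 := h (6 * (n / 6) + 2)
  have e5 := h (6 * (n / 6) + 3)
  have e6 := h (6 * (n / 6) + 4)
  have hn : n + 1 = 6 * (n / 6) + (n % 6 + 1) := by omega
  have hlt : n % 6 < 6 := Nat.mod_lt _ (by norm_num)
  rw [hn]
  generalize n / 6 = q at *
  suffices H : ∀ r (hr : r < 6), t (6 * q + (r + 1)) =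
      ![1, 0, -1, -1, 0, 1] (⟨r, hr⟩ : Fin 6) from H _ hlt
  clear hn hlt
  intro r hr
  simp only [add_assoc, Nat.reduceAdd] at e2 e3 e4 e5 e6
  interval_cases r <;> simp <;> linarith

end Stmt9Aux

/-- The sequence of Hankel determinants of the counting sequence of Dyck paths
with all peaks at odd heights (i.e. avoiding even peak heights) is the periodic
sequence `(1, 0, -1, -1, 0, 1)^*`, where the `n`-th entry (for `n ≥ 1`) is the
determinant of the `n × n` matrix with `(i,j)` entry `d_{i+j}`. -/
theorem stmt9 (n : ℕ) :
    Matrix.det (Matrix.of fun i j : Fin (n + 1) =>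
        (dyckCount (fun k => Even k) ((i : ℕ) + (j : ℕ)) : ℤ))
      = ![1, 0, -1, -1, 0, 1] ⟨n % 6, Nat.mod_lt _ (by norm_num)⟩ := by
  simp only [Stmt9Aux.dyck_eq]
  rw [Stmt9Aux.hankel, Matrix.det_mul, Matrix.det_mul, Matrix.det_transpose,
    Stmt9Aux.det_WM, one_mul, mul_one, Stmt9Aux.det_val]
end

section
/- Let D₁, D₂, D₃ be the generating functions for Dyck paths with peak heights avoiding the residue classes 1, 2, 3 modulo 3 respectively. Then D₂(x) = x + D₁(x). -/
open PowerSeries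

/-- Let `D₁, D₂, D₃` be the generating functions for Dyck paths with peak heights
avoiding the congruence classes of `1`, `2`, `3` modulo `3`, respectively, given by
their continued-fraction functional equations.  Then `D₂(x) = x + D₁(x)`. -/
theorem stmt11 (D₁ D₂ D₃ : PowerSeries ℚ)
    (h₁ : D₁ = (1 + PowerSeries.X - PowerSeries.X *
        (1 - PowerSeries.X * (1 - PowerSeries.X * D₁)⁻¹)⁻¹)⁻¹)
    (h₂ : D₂ = (1 - PowerSeries.X * (1 + PowerSeries.X - PowerSeries.X *
        (1 - PowerSeries.X * D₂)⁻¹)⁻¹)⁻¹)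
    (h₃ : D₃ = (1 - PowerSeries.X * (1 - PowerSeries.X * (1 + PowerSeries.X -
        PowerSeries.X * D₃)⁻¹)⁻¹)⁻¹) :
    D₂ = PowerSeries.X + D₁ := by
  clear h₃
  have key : ∀ f : PowerSeries ℚ, PowerSeries.constantCoeff f = 1 → f * f⁻¹ = 1 := by
    intro f hf
    exact PowerSeries.mul_inv_cancel f (by rw [hf]; exact one_ne_zero)
  have a1 := key (1 - PowerSeries.X * D₁) (by simp)
  have a2 := key (1 - PowerSeries.X * (1 - PowerSeries.X * D₁)⁻¹) (by simp)
  have a3 := key (1 + PowerSeries.X - PowerSeries.X *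
        (1 - PowerSeries.X * (1 - PowerSeries.X * D₁)⁻¹)⁻¹) (by simp)
  rw [← h₁] at a3
  have b1 := key (1 - PowerSeries.X * D₂) (by simp)
  have b2 := key (1 + PowerSeries.X - PowerSeries.X * (1 - PowerSeries.X * D₂)⁻¹) (by simp)
  have b3 := key (1 - PowerSeries.X * (1 + PowerSeries.X - PowerSeries.X *
        (1 - PowerSeries.X * D₂)⁻¹)⁻¹) (by simp)
  rw [← h₂] at b3
  clear h₁ h₂
  generalize (1 - PowerSeries.X * (1 - PowerSeries.X * D₁)⁻¹)⁻¹ = v at *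
  generalize (1 - PowerSeries.X * D₁)⁻¹ = u at *
  generalize (1 + PowerSeries.X - PowerSeries.X * (1 - PowerSeries.X * D₂)⁻¹)⁻¹ = t at *
  generalize (1 - PowerSeries.X * D₂)⁻¹ = s at *
  -- clear denominators
  have a2' : (1 - PowerSeries.X - PowerSeries.X * D₁) * v = 1 - PowerSeries.X * D₁ := by
    linear_combination (1 - PowerSeries.X * D₁) * a2 + PowerSeries.X * v * a1
  have qa : PowerSeries.X * D₁ ^ 2 - (1 - PowerSeries.X ^ 2) * D₁ + 1 - PowerSeries.X = 0 := by
    linear_combination (-(1 - PowerSeries.X - PowerSeries.X * D₁)) * a3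
      - PowerSeries.X * D₁ * a2'
  have b2' : (1 - PowerSeries.X * D₂ - PowerSeries.X ^ 2 * D₂) * t = 1 - PowerSeries.X * D₂ := by
    linear_combination (1 - PowerSeries.X * D₂) * b2 + PowerSeries.X * t * b1
  have qb : PowerSeries.X * D₂ ^ 2 - (1 + PowerSeries.X ^ 2) * D₂ + 1 = 0 := by
    linear_combination (-(1 - PowerSeries.X * D₂ - PowerSeries.X ^ 2 * D₂)) * b3
      - PowerSeries.X * D₂ * b2'
  have hprod : (D₂ - (PowerSeries.X + D₁)) *
      (PowerSeries.X * (D₂ + PowerSeries.X + D₁) - (1 + PowerSeries.X ^ 2)) = 0 := by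
    linear_combination qb - qa
  rcases mul_eq_zero.mp hprod with h | h
  · exact sub_eq_zero.mp h
  · have := congrArg PowerSeries.constantCoeff h
    simp at this
end

section
/- For m = 2p even and V = {2s} with 1 ≤ s ≤ p, the sequence of Hankel determinants of the generating function D for Dyck paths avoiding peak heights congruent to 2s mod m begins with s ones and is then partitioned into consecutive blocks of length p, where the j-th block (a_{j,1}, ..., a_{j,p}) is an arithmetic progression with common difference d_j, with a_{1,1} = 0, d_1 = -1, a_{j,1} = d_{j-1}, and d_j = d_{j-1} - a_{j-1,p} for j ≥ 2. -/
namespace HankelAux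

/-! ### Tridiagonal determinants -/

/-- Entries of a tridiagonal matrix with off-diagonal entries one. -/
def tri (c : ℕ → ℤ) (i j : ℕ) : ℤ :=
  if i = j then c i else if i + 1 = j ∨ j + 1 = i then 1 else 0

/-- Leading principal minors of `tri c`. -/
noncomputable def triDet (c : ℕ → ℤ) (n : ℕ) : ℤ :=
  Matrix.det (Matrix.of fun i j : Fin n => tri c i j)

lemma triDet_zero (c : ℕ → ℤ) : triDet c 0 = 1 := by simp [triDet]

lemma triDet_one (c : ℕ → ℤ) : triDet c 1 = c 0 := by simp [triDet, tri]

lemma triDet_rec (c : ℕ → ℤ) (n : ℕ) :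
    triDet c (n + 2) = c (n + 1) * triDet c (n + 1) - triDet c n := by
  have hminor : Matrix.det ((Matrix.of fun i j : Fin (n + 2) => tri c i j).submatrix
      (Fin.last (n + 1)).succAbove (Fin.castSucc (Fin.last n)).succAbove) = triDet c n := by
    rw [Matrix.det_succ_column _ (Fin.last n), Fin.sum_univ_castSucc, Finset.sum_eq_zero]
    · have h1 : (Matrix.of fun i j : Fin n => tri c i j) =
        ((Matrix.of fun i j : Fin (n + 2) => tri c i j).submatrix
          (Fin.last (n + 1)).succAbove (Fin.castSucc (Fin.last n)).succAbove).submatrix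
          (Fin.last n).succAbove (Fin.last n).succAbove := by
        ext i j
        have hj : (Fin.castSucc (Fin.last n)).succAbove (Fin.castSucc j) =
            Fin.castSucc (Fin.castSucc j) := by
          apply Fin.succAbove_of_castSucc_lt
          simp [Fin.lt_def]
        simp [hj]
      rw [← h1]
      simp [triDet, tri, Fin.succAbove, Fin.lt_def, ← two_mul]
    · intro x _
      have hx := x.2
      have : tri c x (n + 1) = 0 := by
        unfold tri
        rw [if_neg (by omega), if_neg (by omega)]
      simp [Fin.succAbove, Fin.lt_def, this]
  rw [triDet, Matrix.det_succ_row _ (Fin.last (n + 1)), Fin.sum_univ_castSucc,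
    Fin.sum_univ_castSucc, Finset.sum_eq_zero, hminor]
  · have h2 : ((Matrix.of fun i j : Fin (n + 2) => tri c i j).submatrix
        (Fin.last (n + 1)).succAbove (Fin.last (n + 1)).succAbove) =
        (Matrix.of fun i j : Fin (n + 1) => tri c i j) := by
      ext i j
      simp
    rw [h2]
    have e1 : tri c (n + 1) n = 1 := by simp [tri]
    have e2 : tri c (n + 1) (n + 1) = c (n + 1) := by simp [tri]
    have e3 : (-1 : ℤ) ^ (n + 1 + n) = -1 := Odd.neg_one_pow ⟨n, by ring⟩
    have e4 : (-1 : ℤ) ^ (n + 1 + (n + 1)) = 1 := Even.neg_one_pow ⟨n + 1, by ring⟩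
    simp only [Matrix.of_apply, Fin.val_last, Fin.val_castSucc, e1, e2, e3, e4]
    rw [← triDet]
    ring
  · intro x _
    have hx := x.2
    have : tri c (n + 1) x = 0 := by
      unfold tri
      rw [if_neg (by omega), if_neg (by omega)]
    simp [this]

/-! ### The orthogonal-polynomial-like basis -/

/-- Diagonal of the tridiagonal matrix. -/
def diag (t : ℕ → ℤ) (k : ℕ) : ℤ := (if k = 0 then 1 else 2) - t k

/-- Number of paths with `2 n` steps ending with an up-step at height `2 k`. -/
def L (t : ℕ → ℤ) : ℕ → ℕ → ℤ
  | 0, k => if k = 0 then 1 else 0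
  | _ + 1, 0 => 0
  | n + 1, k + 1 => L t n k + (2 - t (k + 1)) * L t n (k + 1) + L t n (k + 2)

lemma L_support (t : ℕ → ℤ) (n : ℕ) : ∀ k, n < k → L t n k = 0 := by
  induction n with
  | zero => intro k hk; simp [L]; omega
  | succ n ih =>
    intro k hk
    obtain ⟨k, rfl⟩ : ∃ l, k = l + 1 := ⟨k - 1, by omega⟩
    simp [L, ih k (by omega), ih (k + 1) (by omega), ih (k + 2) (by omega)]

lemma L_self (t : ℕ → ℤ) (n : ℕ) : L t n n = 1 := by
  induction n with
  | zero => simp [L]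
  | succ n ih => simp [L, ih, L_support t n (n + 1) (by omega), L_support t n (n + 2) (by omega)]

/-- The operator of the tridiagonal matrix. -/
def Q (t : ℕ → ℤ) (y : ℕ → ℤ) : ℕ → ℤ
  | 0 => (1 - t 0) * y 0 + y 1
  | k + 1 => y k + (2 - t (k + 1)) * y (k + 1) + y (k + 2)

lemma sum_parts (t x y : ℕ → ℤ) (N : ℕ) :
    ∑ k ∈ Finset.range (N + 1), ((x k + x (k + 1)) * (y k + y (k + 1)) - t k * x k * y k) =
    ∑ k ∈ Finset.range (N + 1), x k * Q t y k + x (N + 1) * (y N + y (N + 1)) := by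
  induction N with
  | zero => simp [Q]; ring
  | succ N ih =>
    rw [Finset.sum_range_succ, ih, Finset.sum_range_succ _ (N + 1)]
    simp only [Q]
    ring

lemma B_symm (t x y : ℕ → ℤ) (N : ℕ) (hx : x (N + 1) = 0) (hy : y (N + 1) = 0) :
    ∑ k ∈ Finset.range (N + 1), x k * Q t y k = ∑ k ∈ Finset.range (N + 1), y k * Q t x k := by
  have h1 := sum_parts t x y N
  have h2 := sum_parts t y x N
  rw [hx, zero_mul, add_zero] at h1
  rw [hy, zero_mul, add_zero] at h2
  rw [← h1, ← h2]
  exact Finset.sum_congr rfl fun k _ => by ring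

lemma B_succ (t : ℕ → ℤ) (i : ℕ) (z : ℕ → ℤ) (N : ℕ) :
    ∑ k ∈ Finset.range (N + 1), L t (i + 1) k * z k =
    ∑ k ∈ Finset.range N, Q t (L t i) (k + 1) * z (k + 1) := by
  rw [Finset.sum_range_succ']
  simp [L, Q]

lemma B_shift (t : ℕ → ℤ) (i j N : ℕ) (hi : i < N + 1) (hj : j + 1 < N + 1) :
    ∑ k ∈ Finset.range (N + 1), L t (i + 1) k * Q t (L t j) k =
    ∑ k ∈ Finset.range (N + 1), L t i k * Q t (L t (j + 1)) k := by
  rw [B_symm t (L t i) (L t (j + 1)) N (L_support t _ _ (by omega)) (L_support t _ _ (by omega)),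
    B_succ, B_succ]
  exact Finset.sum_congr rfl fun k _ => by ring

/-- The moments. -/
def mom (t : ℕ → ℤ) (n : ℕ) : ℤ := L t n 0 + L t n 1

lemma B_eq_mom (t : ℕ → ℤ) (ht : t 0 = 0) (N i : ℕ) : ∀ j, i + j < N + 1 →
    ∑ k ∈ Finset.range (N + 1), L t i k * Q t (L t j) k = mom t (i + j) := by
  induction i with
  | zero =>
    intro j _
    rw [Finset.sum_eq_single 0]
    · simp [L, Q, mom, ht]
    · intro b _ hb; simp [L, hb]
    · simp
  | succ i ih =>
    intro j hj
    rw [B_shift t i j N (by omega) (by omega), ih (j + 1) (by omega)]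
    congr 1
    omega

lemma B_eq_mom' (t : ℕ → ℤ) (ht : t 0 = 0) (N i j : ℕ) (hi : i < N) :
    ∑ k ∈ Finset.range N, L t i k * Q t (L t j) k = mom t (i + j) := by
  rw [← B_eq_mom t ht (N + i + j) i j (by omega)]
  apply Finset.sum_subset
  · intro x; simp; omega
  · intro x _ hx
    simp at hx
    rw [L_support t i x (by omega), zero_mul]

lemma Q_eq (t y : ℕ → ℤ) (N : ℕ) (hy : y N = 0) (k : ℕ) (hk : k < N) :
    ∑ l ∈ Finset.range N, tri (diag t) k l * y l = Q t y k := by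
  have key : ∑ l ∈ Finset.range (N + 1), tri (diag t) k l * y l = Q t y k := by
    cases k with
    | zero =>
      have hs : ({0, 1} : Finset ℕ) ⊆ Finset.range (N + 1) := by
        intro x; simp; omega
      rw [← Finset.sum_subset hs]
      · rw [Finset.sum_pair (by omega)]
        simp [tri, diag, Q]
      · intro x _ hx
        simp at hx
        have : tri (diag t) 0 x = 0 := by
          unfold tri
          rw [if_neg (by omega), if_neg (by omega)]
        rw [this, zero_mul]
    | succ k =>
      have hs : ({k, k + 1, k + 2} : Finset ℕ) ⊆ Finset.range (N + 1) := by
        intro x; simp; omega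
      rw [← Finset.sum_subset hs]
      · rw [Finset.sum_insert (by simp), Finset.sum_pair (by omega)]
        simp [tri, diag, Q]
        ring
      · intro x _ hx
        simp at hx
        have : tri (diag t) (k + 1) x = 0 := by
          unfold tri
          rw [if_neg (by omega), if_neg (by omega)]
        rw [this, zero_mul]
  rw [← key, Finset.sum_range_succ, hy, mul_zero, add_zero]

lemma hankel_mom (t : ℕ → ℤ) (ht : t 0 = 0) (N : ℕ) :
    Matrix.det (Matrix.of fun i j : Fin N => mom t (i + j)) = triDet (diag t) N := by
  set A : Matrix (Fin N) (Fin N) ℤ := Matrix.of fun i j : Fin N => L t i j with hA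
  have hdet : A.det = 1 := by
    rw [Matrix.det_of_lowerTriangular]
    · simp [hA, L_self]
    · intro i j hij
      exact L_support t _ _ hij
  have : (Matrix.of fun i j : Fin N => mom t (i + j)) =
      A * (Matrix.of fun i j : Fin N => tri (diag t) i j) * A.transpose := by
    rw [Matrix.mul_assoc]
    ext i j
    rw [Matrix.mul_apply]
    simp only [Matrix.mul_apply, Matrix.of_apply, Matrix.transpose_apply, hA]
    rw [← B_eq_mom' t ht N i j i.2, ← Fin.sum_univ_eq_sum_range]
    refine Finset.sum_congr rfl fun k _ => ?_
    rw [← Q_eq t (L t j) N (L_support t _ _ j.2) k k.2, ← Fin.sum_univ_eq_sum_range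
      (fun l => tri (diag t) k l * L t j l)]
  rw [this, Matrix.det_mul, Matrix.det_mul, Matrix.det_transpose, hdet, triDet]
  ring

/-! ### Counting paths -/

/-- Partial paths with `t` steps, final height `h`, last step `b`. -/
def G (S : ℕ → Prop) (t : ℕ) (h : ℤ) (b : Bool) : Set (ℕ → Bool) :=
  {p | (∀ i, t ≤ i → p i = false) ∧ (∀ k, k ≤ t → 0 ≤ pathHeight p k) ∧ pathHeight p t = h ∧
    (∀ i, i + 1 < t → p i = true → p (i + 1) = false → ¬ S (pathHeight p (i + 1)).toNat) ∧
    p (t - 1) = b}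

lemma height_succ (p : ℕ → Bool) (k : ℕ) :
    pathHeight p (k + 1) = pathHeight p k + (if p k then 1 else -1) := by
  simp [pathHeight, Finset.sum_range_succ]

lemma height_congr (p q : ℕ → Bool) (k : ℕ) (h : ∀ i, i < k → p i = q i) :
    pathHeight p k = pathHeight q k := by
  unfold pathHeight
  exact Finset.sum_congr rfl fun i hi => by rw [h i (Finset.mem_range.1 hi)]

lemma height_update (p : ℕ → Bool) (t k : ℕ) (b : Bool) (h : k ≤ t) :
    pathHeight (Function.update p t b) k = pathHeight p k :=
  height_congr _ _ _ fun i hi => Function.update_of_ne (by omega) _ _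

lemma G_neg (S : ℕ → Prop) (t : ℕ) (h : ℤ) (b : Bool) (hh : h < 0) : G S t h b = ∅ := by
  ext p
  simp only [G, Set.mem_setOf_eq, Set.mem_empty_iff_false, iff_false]
  rintro ⟨_, h2, h3, _⟩
  have := h2 t le_rfl
  omega

lemma G_zero_true (S : ℕ → Prop) (h : ℤ) : G S 0 h true = ∅ := by
  ext p
  simp only [G, Set.mem_setOf_eq, Set.mem_empty_iff_false, iff_false]
  rintro ⟨h1, _, _, _, h5⟩
  have := h1 0 le_rfl
  simp_all

lemma G_zero_false (S : ℕ → Prop) (h : ℤ) :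
    G S 0 h false = if h = 0 then {fun _ => false} else ∅ := by
  ext p
  split_ifs with hh
  · subst hh
    simp only [G, Set.mem_setOf_eq, Set.mem_singleton_iff]
    constructor
    · rintro ⟨h1, _⟩
      funext i
      exact h1 i (Nat.zero_le _)
    · rintro rfl
      simp [pathHeight]
  · simp only [G, Set.mem_setOf_eq, Set.mem_empty_iff_false, iff_false]
    rintro ⟨_, _, h3, _⟩
    exact hh (by simpa [pathHeight] using h3.symm)

lemma G_succ_true (S : ℕ → Prop) (t : ℕ) (h : ℤ) :
    G S (t + 1) h true =
      Set.image (fun p => Function.update p t true) (G S t (h - 1) true ∪ G S t (h - 1) false) := by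
  ext p
  constructor
  · rintro ⟨h1, h2, h3, h4, h5⟩
    simp only [Nat.add_sub_cancel] at h5
    refine ⟨Function.update p t false, ?_, ?_⟩
    · have hmem : Function.update p t false ∈
          G S t (h - 1) ((Function.update p t false) (t - 1)) := by
        refine ⟨?_, ?_, ?_, ?_, rfl⟩
        · intro i hi
          by_cases hit : i = t
          · subst hit; simp
          · rw [Function.update_of_ne hit]; exact h1 i (by omega)
        · intro k hk
          rw [height_update _ _ _ _ hk]; exact h2 k (by omega)
        · rw [height_update _ _ _ _ le_rfl]
          rw [height_succ, h5] at h3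
          simp at h3
          omega
        · intro i hi hp hq
          rw [Function.update_of_ne (by omega)] at hp hq
          rw [height_update _ _ _ _ (by omega)]
          exact h4 i (by omega) hp hq
      cases hb : (Function.update p t false) (t - 1)
      · right; rwa [hb] at hmem
      · left; rwa [hb] at hmem
    · simp [← h5]
  · rintro ⟨q, hq, rfl⟩
    have hq' : ∃ b, q ∈ G S t (h - 1) b := by
      rcases hq with hq | hq
      · exact ⟨_, hq⟩
      · exact ⟨_, hq⟩
    obtain ⟨b, h1, h2, h3, h4, _⟩ := hq'
    have ht : pathHeight (Function.update q t true) (t + 1) = h := by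
      rw [height_succ, height_update _ _ _ _ le_rfl, h3]
      simp
    refine ⟨?_, ?_, ht, ?_, by simp⟩
    · intro i hi
      simp only
      rw [Function.update_of_ne (by omega)]
      exact h1 i (by omega)
    · intro k hk
      simp only
      rcases Nat.lt_or_ge t k with hk' | hk'
      · obtain rfl : k = t + 1 := by omega
        rw [ht]
        have := h2 t le_rfl
        omega
      · rw [height_update _ _ _ _ hk']; exact h2 k hk'
    · intro i hi hp hq
      simp only at hp hq ⊢
      rw [height_update _ _ _ _ (by omega)]
      rcases Nat.lt_or_ge (i + 1) t with hk' | hk'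
      · rw [Function.update_of_ne (by omega)] at hp hq
        exact h4 i hk' hp hq
      · obtain rfl : t = i + 1 := by omega
        simp at hq

lemma G_succ_false (S : ℕ → Prop) (t : ℕ) (h : ℤ) (hh : 0 ≤ h) :
    G S (t + 1) h false =
      G S t (h + 1) false ∪ {p | p ∈ G S t (h + 1) true ∧ ¬ S (h + 1).toNat} := by
  ext p
  constructor
  · rintro ⟨h1, h2, h3, h4, h5⟩
    simp only [Nat.add_sub_cancel] at h5
    have h6 : pathHeight p t = h + 1 := by
      rw [height_succ, h5] at h3
      simp at h3
      omega
    have hmem : p ∈ G S t (h + 1) (p (t - 1)) := by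
      refine ⟨?_, fun k hk => h2 k (by omega), h6, fun i hi => h4 i (by omega), rfl⟩
      intro i hi
      by_cases hit : i = t
      · rw [hit, h5]
      · exact h1 i (by omega)
    cases hb : p (t - 1)
    · left; rwa [hb] at hmem
    · right
      rw [hb] at hmem
      refine ⟨hmem, ?_⟩
      rcases t with _ | t
      · simp at hb
        simp [hb] at h5
      · rw [← h6]
        exact h4 t (by omega) (by simpa using hb) h5
  · intro hp
    have hq' : ∃ b, p ∈ G S t (h + 1) b ∧ (b = true → ¬ S (h + 1).toNat) := by
      rcases hp with hq | hq
      · exact ⟨_, hq, by simp⟩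
      · exact ⟨_, hq.1, fun _ => hq.2⟩
    obtain ⟨b, ⟨h1, h2, h3, h4, h5⟩, h6⟩ := hq'
    have ht : pathHeight p (t + 1) = h := by
      rw [height_succ, h3, h1 t le_rfl]
      simp
    refine ⟨fun i hi => h1 i (by omega), ?_, ht, ?_, by simpa using h1 t le_rfl⟩
    · intro k hk
      rcases Nat.lt_or_ge t k with hk' | hk'
      · obtain rfl : k = t + 1 := by omega
        rw [ht]; exact hh
      · exact h2 k hk'
    · intro i hi hpi hqi
      rcases Nat.lt_or_ge (i + 1) t with hk' | hk'
      · exact h4 i hk' hpi hqi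
      · obtain rfl : t = i + 1 := by omega
        rw [h3]
        apply h6
        rw [← h5]
        simpa using hpi

lemma G_finite (S : ℕ → Prop) (t : ℕ) : ∀ h b, (G S t h b).Finite := by
  induction t with
  | zero =>
    intro h b
    cases b
    · rw [G_zero_false]; split_ifs <;> simp
    · rw [G_zero_true]; simp
  | succ t ih =>
    intro h b
    cases b
    · rcases lt_or_ge h 0 with hh | hh
      · rw [G_neg _ _ _ _ hh]; simp
      · rw [G_succ_false _ _ _ hh]
        exact (ih _ _).union ((ih (h + 1) true).subset fun p hp => hp.1)
    · rw [G_succ_true]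
      exact ((ih _ _).union (ih _ _)).image _

lemma G_disj (S : ℕ → Prop) (t : ℕ) (h h' : ℤ) : Disjoint (G S t h true) (G S t h' false) := by
  rw [Set.disjoint_left]
  rintro p ⟨_, _, _, _, h1⟩ ⟨_, _, _, _, h2⟩
  simp [h1] at h2

/-- Counts. -/
noncomputable def cnt (S : ℕ → Prop) (t : ℕ) (h : ℤ) (b : Bool) : ℤ := (G S t h b).ncard

lemma cnt_true (S : ℕ → Prop) (t : ℕ) (h : ℤ) :
    cnt S (t + 1) h true = cnt S t (h - 1) true + cnt S t (h - 1) false := by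
  unfold cnt
  rw [G_succ_true, Set.ncard_image_of_injOn,
    Set.ncard_union_eq (G_disj S t _ _) (G_finite _ _ _ _) (G_finite _ _ _ _)]
  · push_cast; rfl
  · intro p hp q hq hpq
    have hp' : p t = false := by
      rcases hp with hp | hp <;> exact hp.1 t le_rfl
    have hq' : q t = false := by
      rcases hq with hp | hp <;> exact hp.1 t le_rfl
    funext i
    by_cases hi : i = t
    · rw [hi, hp', hq']
    · have := congrFun hpq i
      simpa [Function.update_of_ne hi] using this

open Classical in
lemma cnt_false (S : ℕ → Prop) (t : ℕ) (h : ℤ) (hh : 0 ≤ h) :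
    cnt S (t + 1) h false = cnt S t (h + 1) false +
      (1 - if S (h + 1).toNat then 1 else 0) * cnt S t (h + 1) true := by
  unfold cnt
  rw [G_succ_false _ _ _ hh]
  split_ifs with hS
  · simp [hS]
  · simp only [hS, not_false_eq_true, and_true, Set.setOf_mem_eq]
    rw [Set.ncard_union_eq (G_disj S t _ _).symm (G_finite _ _ _ _) (G_finite _ _ _ _)]
    push_cast; ring

open Classical in
/-- Indicator of the forbidden even heights. -/
noncomputable def ind (S : ℕ → Prop) (k : ℕ) : ℤ := if S (2 * k) then 1 else 0

lemma cnt_L (S : ℕ → Prop) (hS : ∀ k, ¬ S (2 * k + 1)) (n : ℕ) :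
    (∀ k : ℕ, cnt S (2 * n) (2 * (k + 1)) true = L (ind S) n (k + 1)) ∧
    (∀ k : ℕ, cnt S (2 * n) (2 * k) true + cnt S (2 * n) (2 * k) false =
      L (ind S) n k + L (ind S) n (k + 1)) := by
  classical
  induction n with
  | zero =>
    constructor
    · intro k; simp [cnt, G_zero_true, L]
    · intro k
      simp only [Nat.mul_zero, cnt, G_zero_true, G_zero_false, L]
      rcases k with _ | k
      · simp
      · rw [if_neg (by omega)]; simp
  | succ n ih =>
    obtain ⟨ih1, ih2⟩ := ih
    have e : 2 * (n + 1) = 2 * n + 1 + 1 := by ring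
    have a1 : ∀ k : ℕ, cnt S (2 * n + 1) (2 * k + 1) true =
        L (ind S) n k + L (ind S) n (k + 1) := by
      intro k
      rw [cnt_true, ← ih2 k]
      simp
    have a2 : ∀ k : ℕ, cnt S (2 * n + 1) (2 * k + 1) false =
        (1 - ind S (k + 1)) * L (ind S) n (k + 1) + L (ind S) n (k + 2) := by
      intro k
      rw [cnt_false _ _ _ (by positivity)]
      have e1 : (2 * (k : ℤ) + 1 + 1) = 2 * ((k : ℤ) + 1) := by ring
      have e2 : (2 * ((k : ℤ) + 1)).toNat = 2 * (k + 1) := by omega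
      have h1 := ih1 k
      have h2 := ih2 (k + 1)
      push_cast at h2
      rw [e1, e2]
      simp only [ind] at *
      linear_combination h2 - (if S (2 * (k + 1)) then 1 else 0) * h1
    have a3 : ∀ k : ℕ, cnt S (2 * (n + 1)) (2 * (k + 1)) true = L (ind S) (n + 1) (k + 1) := by
      intro k
      rw [e, cnt_true]
      have e1 : (2 * ((k : ℤ) + 1) - 1) = 2 * k + 1 := by ring
      rw [e1, a1, a2]
      simp only [L]
      ring
    refine ⟨a3, ?_⟩
    intro k
    have a4 : cnt S (2 * (n + 1)) (2 * k) false = L (ind S) (n + 1) (k + 1) := by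
      rw [e, cnt_false _ _ _ (by positivity)]
      have e2 : (2 * (k : ℤ) + 1).toNat = 2 * k + 1 := by omega
      rw [e2, if_neg (hS k), a1, a2]
      simp only [L]
      ring
    rw [a4]
    congr 1
    rcases k with _ | k
    · rw [e, cnt_true]
      simp [cnt, G_neg, L]
    · rw [← a3 k]
      push_cast
      rfl

lemma dyckCount_eq (S : ℕ → Prop) (hS : ∀ k, ¬ S (2 * k + 1)) (n : ℕ) :
    (dyckCount S n : ℤ) = mom (ind S) n := by
  have h := (cnt_L S hS n).2 0
  rw [mom]
  simp only [Nat.cast_zero, mul_zero, zero_add] at h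
  rw [← h]
  unfold cnt
  rw [← Nat.cast_add, ← Set.ncard_union_eq (G_disj S _ _ _) (G_finite _ _ _ _) (G_finite _ _ _ _)]
  congr 1
  unfold dyckCount
  rw [← Nat.card_coe_set_eq]
  apply Nat.card_congr
  apply Equiv.subtypeEquivRight
  intro p
  simp only [Set.mem_union, G, Set.mem_setOf_eq]
  cases p (2 * n - 1) <;> simp

lemma hankel_dyck (S : ℕ → Prop) (hS : ∀ k, ¬ S (2 * k + 1)) (h0 : ¬ S 0) (N : ℕ) :
    Matrix.det (Matrix.of fun i j : Fin N => (dyckCount S ((i : ℕ) + (j : ℕ)) : ℤ)) =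
      triDet (diag (ind S)) N := by
  simp only [dyckCount_eq S hS]
  exact hankel_mom _ (by simp [ind, h0]) N

end HankelAux

/-- Theorem: for `m = 2p` and `V = {2s}` with `1 ≤ s ≤ p`, the sequence of Hankel
determinants `H_n` of the counting sequence of Dyck paths avoiding peak heights
`≡ 2s (mod 2p)` begins with `s` ones and then splits into consecutive blocks of
length `p`, the `j`-th block `(a_{j,0}, …, a_{j,p-1})` being an arithmetic
progression with common difference `d_j`, where `a_{0,0} = 0`, `d_0 = -1`,
`a_{j+1,0} = d_j` and `d_{j+1} = d_j - a_{j,p-1}`. -/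
theorem stmt12 (p s : ℕ) (hs1 : 1 ≤ s) (hsp : s ≤ p) :
    ∃ (a : ℕ → ℕ → ℤ) (d : ℕ → ℤ),
      a 0 0 = 0 ∧ d 0 = -1 ∧
      (∀ j, a (j + 1) 0 = d j) ∧
      (∀ j, d (j + 1) = d j - a j (p - 1)) ∧
      (∀ j k, k + 1 < p → a j (k + 1) = a j k + d j) ∧
      (∀ n, n < s →
        Matrix.det (Matrix.of fun i j : Fin (n + 1) =>
          (dyckCount (fun k => 0 < k ∧ k % (2 * p) = (2 * s) % (2 * p)) ((i : ℕ) + (j : ℕ)) : ℤ))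
          = 1) ∧
      (∀ j k, k < p →
        Matrix.det (Matrix.of fun i j' : Fin (s + j * p + k + 1) =>
          (dyckCount (fun k' => 0 < k' ∧ k' % (2 * p) = (2 * s) % (2 * p)) ((i : ℕ) + (j' : ℕ)) : ℤ))
          = a j k) := by
  set S : ℕ → Prop := fun k => 0 < k ∧ k % (2 * p) = (2 * s) % (2 * p) with hSdef
  have hp : 0 < p := by omega
  have hodd : ∀ k, ¬ S (2 * k + 1) := by
    rintro k ⟨_, h⟩
    have h1 := congrArg (· % 2) h
    simp only [Nat.mod_mul_right_mod] at h1
    omega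
  have h0 : ¬ S 0 := fun h => absurd h.1 (lt_irrefl _)
  have hS2 : ∀ k, S (2 * k) ↔ 0 < k ∧ k % p = s % p := by
    intro k
    simp only [hSdef, Nat.mul_mod_mul_left]
    omega
  set c := HankelAux.diag (HankelAux.ind S) with hc
  have hin : ∀ j, c (s + j * p) = 1 := by
    intro j
    have : S (2 * (s + j * p)) := (hS2 _).2 ⟨by omega, by simp⟩
    simp only [hc, HankelAux.diag, HankelAux.ind]
    rw [if_neg (by omega), if_pos this]; rfl
  have hout : ∀ k, 0 < k → k % p ≠ s % p → c k = 2 := by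
    intro k hk hk2
    have : ¬ S (2 * k) := fun h => hk2 ((hS2 _).1 h).2
    simp only [hc, HankelAux.diag, HankelAux.ind]
    rw [if_neg (by omega), if_neg this]; rfl
  have hc0 : c 0 = 1 := by
    have : ¬ S (2 * 0) := h0
    simp only [hc, HankelAux.diag, HankelAux.ind]
    rw [if_pos trivial, if_neg this]; rfl
  have hout2 : ∀ j k, 0 < k → k < p → c (s + j * p + k) = 2 := by
    intro j k hk hkp
    apply hout _ (by omega)
    intro h
    have h1 : (s + k) % p = s % p := by
      rw [← h, show s + j * p + k = s + k + j * p by ring, Nat.add_mul_mod_self_right]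
    have h2 : (s + k) ≡ (s + 0) [MOD p] := h1
    have h3 := Nat.ModEq.add_left_cancel' s h2
    have h4 := (Nat.modEq_zero_iff_dvd.1 h3)
    exact absurd (Nat.le_of_dvd hk h4) (by omega)
  have hout3 : ∀ k, 0 < k → k < s → c k = 2 := by
    intro k hk hks
    apply hout _ hk
    rw [Nat.mod_eq_of_lt (by omega : k < p)]
    rcases Nat.lt_or_ge s p with h | h
    · rw [Nat.mod_eq_of_lt h]; omega
    · obtain rfl : s = p := by omega
      rw [Nat.mod_self]; omega
  have hdet := HankelAux.hankel_dyck S hodd h0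
  set T := HankelAux.triDet c with hT
  have hrec : ∀ n, T (n + 2) = c (n + 1) * T (n + 1) - T n := HankelAux.triDet_rec c
  have hrec' : ∀ n, 0 < n → T (n + 1) = c n * T n - T (n - 1) := by
    intro n hn
    obtain ⟨m, rfl⟩ : ∃ m, n = m + 1 := ⟨n - 1, by omega⟩
    exact hrec m
  have hones : ∀ n, n < s → T n = 1 ∧ T (n + 1) = 1 := by
    intro n
    induction n with
    | zero =>
      intro _
      exact ⟨HankelAux.triDet_zero c, (HankelAux.triDet_one c).trans hc0⟩
    | succ n ih =>
      intro hn
      obtain ⟨h1, h2⟩ := ih (by omega)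
      refine ⟨h2, ?_⟩
      rw [hrec, h1, h2, hout3 _ (by omega) hn]
      norm_num
  have hTs : T s = 1 := by
    have := (hones (s - 1) (by omega)).2
    rwa [Nat.sub_add_cancel hs1] at this
  have hTs1 : T (s + 1) = 0 := by
    rw [hrec' s (by omega), hTs, (hones (s - 1) (by omega)).1]
    have := hin 0
    rw [zero_mul, add_zero] at this
    rw [this]; norm_num
  -- differences are constant within a block
  have hdiff : ∀ j k, k < p →
      T (s + j * p + k + 1) - T (s + j * p + k) = T (s + j * p + 1) - T (s + j * p) := by
    intro j k
    induction k with
    | zero => intro _; rfl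
    | succ k ih =>
      intro hk
      have h1 := ih (by omega)
      have h2 := hrec (s + j * p + k)
      have h3 := hout2 j (k + 1) (by omega) hk
      rw [show s + j * p + (k + 1) = s + j * p + k + 1 by ring] at *
      rw [h3] at h2
      linarith
  have hnext : ∀ j, s + (j + 1) * p = s + j * p + (p - 1) + 1 := by
    intro j
    rw [add_mul, one_mul]; omega
  have hstep : ∀ j, T (s + (j + 1) * p + 1) = T (s + j * p + 1) - T (s + j * p) := by
    intro j
    rw [hrec' _ (by omega), hin, ← hdiff j (p - 1) (by omega), hnext]
    simp
  refine ⟨fun j k => T (s + j * p + k + 1), fun j => T (s + j * p + 1) - T (s + j * p),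
    ?_, ?_, ?_, ?_, ?_, ?_, ?_⟩
  · simpa using hTs1
  · simp [hTs1, hTs]
  · intro j
    exact hstep j
  · intro j
    simp only
    rw [hstep, hnext]
  · intro j k hk
    have h1 := hdiff j (k + 1) hk
    simp only [← add_assoc] at h1 ⊢
    linarith
  · intro n hn
    exact (hdet (n + 1)).trans (hones n hn).2
  · intro j k hk
    exact hdet (s + j * p + k + 1)
end
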